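/- Let K ⊆ F₁, F₂ be field extensions, A, B two K-algebras of the same dimension ω with |K| > ω, and suppose the algebraic closure of K embeds in F₂. If A ⊗_K F₁ ≅ B ⊗_K F₁ as F₁-algebras, then A ⊗_K F₂ ≅ B ⊗_K F₂ as F₂-algebras. -/

import Mathlib

open TensorProduct

/-!
Fix `K`-bases of `A` and `B`. An isomorphism `F₁ ⊗ A ≅ F₁ ⊗ B` and its inverse are already defined
over the `K`-subalgebra `R` of `F₁` generated by their matrix entries. There are fewer than
`max ℵ₀ |K|` of these, so every residue field of `R` at a maximal ideal is algebraic over `K`. This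
is Zariski's lemma if there are finitely many entries. Otherwise `R` has dimension less than `|K|`,
whereas a transcendental `x` would make the `|K|` elements `(x - c)⁻¹` linearly independent. Hence
there is a `K`-algebra homomorphism `R → K̄ → F₂`, and extending scalars along it gives
`F₂ ⊗ A ≅ F₂ ⊗ B`.
-/

universe u

section Nullstellensatz

open Cardinal

variable {K R L : Type u} [Field K] [CommRing R] [Algebra K R] [Field L] [Algebra K L]

theorem mk_le_rank_of_transcendental {x : L} (hx : Transcendental K x) : #K ≤ Module.rank K L :=
  hx.linearIndependent_sub_inv.cardinal_le_rank

theorem isAlgebraic_of_adjoin_eq_top_of_mk_lt {S : Set L} (hS : Algebra.adjoin K S = ⊤)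
    (hcard : #S < max ℵ₀ #K) : Algebra.IsAlgebraic K L := by
  rcases lt_or_ge #S ℵ₀ with hfin | hinf
  · have : Algebra.FiniteType K L := ⟨Subalgebra.fg_def.2 ⟨S, lt_aleph0_iff_set_finite.1 hfin, hS⟩⟩
    have : Module.Finite K L := finite_of_finite_type_of_isJacobsonRing K L
    infer_instance
  · have hSK : #S < #K := (lt_max_iff.1 hcard).resolve_left hinf.not_gt
    have hrank : Module.rank K L ≤ #S := by
      have hadjoin := Algebra.rank_adjoin_le (R := K) S
      rwa [hS, subalgebra_top_rank_eq_submodule_top_rank, rank_top, max_eq_left hinf] at hadjoin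
    refine ⟨fun x ↦ not_not.1 fun hx ↦ ?_⟩
    exact (hrank.trans_lt hSK).not_ge (mk_le_rank_of_transcendental hx)

theorem nonempty_algHom_algebraicClosure_of_mk_lt [Nontrivial R] {S : Set R}
    (hS : Algebra.adjoin K S = ⊤) (hcard : #S < max ℵ₀ #K) :
    Nonempty (R →ₐ[K] AlgebraicClosure K) := by
  obtain ⟨m, hm⟩ := Ideal.exists_maximal R
  let _ : Field (R ⧸ m) := Ideal.Quotient.field m
  let q : R →ₐ[K] R ⧸ m := Ideal.Quotient.mkₐ K m
  have hq : Algebra.adjoin K (q '' S) = ⊤ := by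
    rw [← AlgHom.map_adjoin, hS, Algebra.map_top,
      (AlgHom.range_eq_top _).2 (Ideal.Quotient.mkₐ_surjective K m)]
  have : Algebra.IsAlgebraic K (R ⧸ m) :=
    isAlgebraic_of_adjoin_eq_top_of_mk_lt hq (mk_image_le.trans_lt hcard)
  exact ⟨(IsAlgClosed.lift (M := AlgebraicClosure K)).comp q⟩

theorem nonempty_algHom_adjoin_algebraicClosure_of_mk_lt [Nontrivial R] (S : Set R)
    (hcard : #S < max ℵ₀ #K) : Nonempty (Algebra.adjoin K S →ₐ[K] AlgebraicClosure K) :=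
  nonempty_algHom_algebraicClosure_of_mk_lt Algebra.adjoin_adjoin_coe_preimage
    ((mk_preimage_of_injective _ S Subtype.val_injective).trans_lt hcard)

end Nullstellensatz

section MatrixEntries

variable {R M N ι κ : Type*} [Semiring R] [AddCommMonoid M] [Module R M] [AddCommMonoid N]
  [Module R N]

/-- The set of entries of the, possibly infinite, matrix of `f` in the bases `b` and `c`. -/
def matrixEntries (b : Module.Basis ι R M) (c : Module.Basis κ R N) (f : M →ₗ[R] N) : Set R :=
  Set.range fun p : ι × κ ↦ c.repr (f (b p.1)) p.2

theorem repr_mem_matrixEntries (b : Module.Basis ι R M) (c : Module.Basis κ R N) (f : M →ₗ[R] N)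
    (i : ι) (j : κ) : c.repr (f (b i)) j ∈ matrixEntries b c f :=
  ⟨(i, j), rfl⟩

end MatrixEntries

open Cardinal in
theorem mk_matrixEntries_lt {R ι κ : Type u} {M N : Type*} [Semiring R] [AddCommMonoid M]
    [Module R M] [AddCommMonoid N] [Module R N] (b : Module.Basis ι R M) (c : Module.Basis κ R N)
    (f : M →ₗ[R] N) {μ : Cardinal.{u}} (hμ : ℵ₀ ≤ μ) (hι : #ι < μ) (hκ : #κ < μ) :
    #(matrixEntries b c f) < μ := by
  refine mk_range_le.trans_lt ?_
  rw [mk_prod, lift_id, lift_id]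
  exact mul_lt_of_lt hμ hι hκ

section ExtendScalars

variable (K R F A : Type*) [CommSemiring K] [CommSemiring R] [Algebra K R] [CommSemiring F]
  [Algebra K F] [Algebra R F] [IsScalarTower K R F]

section Module

variable [AddCommMonoid A] [Module K A]

/-- The map `R ⊗[K] A → F ⊗[K] A` induced by the structure map `R → F` of an `R`-algebra `F`. -/
noncomputable def extendScalars : R ⊗[K] A →ₗ[R] F ⊗[K] A :=
  AlgebraTensorModule.rTensor K A (Algebra.linearMap R F)

variable {K R F A}

@[simp]
theorem extendScalars_tmul (r : R) (a : A) :
    extendScalars K R F A (r ⊗ₜ a) = algebraMap R F r ⊗ₜ a :=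
  rfl

theorem extendScalars_injective [Module.Flat K A] (h : Function.Injective (algebraMap R F)) :
    Function.Injective (extendScalars K R F A) :=
  Module.Flat.rTensor_preserves_injective_linearMap
    ((Algebra.linearMap R F).restrictScalars K) h

theorem cancelBaseChange_one_tmul (x : R ⊗[K] A) :
    AlgebraTensorModule.cancelBaseChange K R F F A (1 ⊗ₜ x) = extendScalars K R F A x := by
  induction x with
  | zero => simp only [tmul_zero, map_zero]
  | add x y hx hy => simp only [tmul_add, map_add, hx, hy]
  | tmul r a => simp [Algebra.algebraMap_eq_smul_one]

theorem mem_range_extendScalars {ι : Type*} (b : Module.Basis ι K A) {x : F ⊗[K] A}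
    (h : ∀ i, (b.baseChange F).repr x i ∈ Set.range (algebraMap R F)) :
    x ∈ LinearMap.range (extendScalars K R F A) := by
  rw [← (b.baseChange F).linearCombination_repr x, Finsupp.linearCombination_apply]
  refine Submodule.sum_mem _ fun i _ ↦ ?_
  obtain ⟨r, hr⟩ := h i
  refine ⟨r ⊗ₜ b i, ?_⟩
  dsimp only
  rw [extendScalars_tmul, hr, Module.Basis.baseChange_apply, smul_tmul', smul_eq_mul, mul_one]

theorem map_range_extendScalars_le {B ι κ : Type*} [AddCommMonoid B] [Module K B]
    (a : Module.Basis ι K A) (b : Module.Basis κ K B) (f : F ⊗[K] A →ₗ[F] F ⊗[K] B)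
    (h : matrixEntries (a.baseChange F) (b.baseChange F) f ⊆ Set.range (algebraMap R F)) :
    (LinearMap.range (extendScalars K R F A)).map (f.restrictScalars R) ≤
      LinearMap.range (extendScalars K R F B) := by
  rw [← LinearMap.range_comp, LinearMap.range_eq_map, ← (a.baseChange R).span_eq,
    Submodule.map_span_le]
  rintro _ ⟨i, rfl⟩
  refine mem_range_extendScalars b fun j ↦ h ?_
  simpa using repr_mem_matrixEntries (a.baseChange F) (b.baseChange F) f i j

end Module

variable {K R F A}
variable [NonUnitalNonAssocSemiring A] [Module K A] [SMulCommClass K A A] [IsScalarTower K A A]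

theorem map_mul_of_map_one_tmul_mul {C : Type*} [NonUnitalNonAssocSemiring C] [Module F C]
    [SMulCommClass F C C] [IsScalarTower F C C] (f : F ⊗[K] A →ₗ[F] C)
    (hf : ∀ a a' : A, f (1 ⊗ₜ (a * a')) = f (1 ⊗ₜ a) * f (1 ⊗ₜ a')) (x y : F ⊗[K] A) :
    f (x * y) = f x * f y := by
  have tmul_eq_smul (s : F) (a : A) : s ⊗ₜ[K] a = s • (1 ⊗ₜ[K] a) := by
    rw [smul_tmul', smul_eq_mul, mul_one]
  induction x with
  | zero => simp only [zero_mul, map_zero]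
  | add x₁ x₂ h₁ h₂ => simp only [add_mul, map_add, h₁, h₂]
  | tmul s a =>
    induction y with
    | zero => simp only [mul_zero, map_zero]
    | add y₁ y₂ h₁ h₂ => simp only [mul_add, map_add, h₁, h₂]
    | tmul t a' =>
      rw [Algebra.TensorProduct.tmul_mul_tmul, tmul_eq_smul (s * t), tmul_eq_smul s,
        tmul_eq_smul t, map_smul, map_smul, map_smul, hf, smul_mul_smul_comm]

theorem extendScalars_mul (x y : R ⊗[K] A) :
    extendScalars K R F A (x * y) = extendScalars K R F A x * extendScalars K R F A y :=
  map_mul_of_map_one_tmul_mul _ (fun a a' ↦ by simp [Algebra.TensorProduct.tmul_mul_tmul]) x y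

end ExtendScalars

section IsomorphicOver

variable {K R F A B : Type*} [CommSemiring K] [CommSemiring R] [Algebra K R] [CommSemiring F]
  [Algebra K F]
  [NonUnitalNonAssocSemiring A] [Module K A] [SMulCommClass K A A] [IsScalarTower K A A]
  [NonUnitalNonAssocSemiring B] [Module K B] [SMulCommClass K B B] [IsScalarTower K B B]

variable (K R A B) in
/-- The `K`-algebras `A` and `B`, not assumed unital or associative, become isomorphic as
`R`-algebras after extension of scalars to `R`. An isomorphism is encoded as a multiplicative
linear equivalence. -/
def IsomorphicOver : Prop :=
  ∃ e : (R ⊗[K] A) ≃ₗ[R] (R ⊗[K] B), ∀ x y, e (x * y) = e x * e y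

namespace IsomorphicOver

section Tower

variable [Algebra R F] [IsScalarTower K R F]

theorem baseChange (h : IsomorphicOver K R A B) : IsomorphicOver K F A B := by
  obtain ⟨e, he⟩ := h
  let e' : (F ⊗[K] A) ≃ₗ[F] (F ⊗[K] B) :=
    (AlgebraTensorModule.cancelBaseChange K R F F A).symm ≪≫ₗ e.baseChange R F _ _ ≪≫ₗ
      AlgebraTensorModule.cancelBaseChange K R F F B
  have he' (a : A) : e' (1 ⊗ₜ a) = extendScalars K R F B (e (1 ⊗ₜ a)) :=
    cancelBaseChange_one_tmul _
  have one_tmul_mul (a a' : A) : (1 ⊗ₜ (a * a') : R ⊗[K] A) = 1 ⊗ₜ a * 1 ⊗ₜ a' := by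
    rw [Algebra.TensorProduct.tmul_mul_tmul, mul_one]
  refine ⟨e', map_mul_of_map_one_tmul_mul e'.toLinearMap fun a a' ↦ ?_⟩
  simp only [LinearEquiv.coe_coe, he', one_tmul_mul, he, extendScalars_mul]

theorem of_map_range_eq [Module.Flat K A] [Module.Flat K B]
    (hinj : Function.Injective (algebraMap R F)) (e : (F ⊗[K] A) ≃ₗ[F] (F ⊗[K] B))
    (he : ∀ x y, e (x * y) = e x * e y)
    (hrange : (LinearMap.range (extendScalars K R F A)).map
      (e.restrictScalars R : F ⊗[K] A →ₗ[R] F ⊗[K] B) =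
        LinearMap.range (extendScalars K R F B)) :
    IsomorphicOver K R A B := by
  have hinjA : Function.Injective (extendScalars K R F A) := extendScalars_injective hinj
  have hinjB : Function.Injective (extendScalars K R F B) := extendScalars_injective hinj
  let e₀ : (R ⊗[K] A) ≃ₗ[R] (R ⊗[K] B) :=
    LinearEquiv.ofInjective _ hinjA ≪≫ₗ (e.restrictScalars R).ofSubmodules _ _ hrange ≪≫ₗ
      (LinearEquiv.ofInjective _ hinjB).symm
  have he₀ (x : R ⊗[K] A) : extendScalars K R F B (e₀ x) = e (extendScalars K R F A x) :=
    congrArg Subtype.val ((LinearEquiv.ofInjective _ hinjB).apply_symm_apply _)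
  refine ⟨e₀, fun x y ↦ hinjB ?_⟩
  simp only [he₀, extendScalars_mul, he]

end Tower

theorem of_algHom (φ : R →ₐ[K] F) (h : IsomorphicOver K R A B) : IsomorphicOver K F A B := by
  let _ : Algebra R F := φ.toAlgebra
  have : IsScalarTower K R F := .of_algHom φ
  exact h.baseChange

theorem adjoin_matrixEntries {ι κ : Type*} (a : Module.Basis ι K A) (b : Module.Basis κ K B)
    (e : (F ⊗[K] A) ≃ₗ[F] (F ⊗[K] B)) (he : ∀ x y, e (x * y) = e x * e y) :
    IsomorphicOver K
      (Algebra.adjoin K (matrixEntries (a.baseChange F) (b.baseChange F) e.toLinearMap ∪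
        matrixEntries (b.baseChange F) (a.baseChange F) e.symm.toLinearMap)) A B := by
  have : Module.Free K A := .of_basis a
  have : Module.Free K B := .of_basis b
  set S := matrixEntries (a.baseChange F) (b.baseChange F) e.toLinearMap
  set T := matrixEntries (b.baseChange F) (a.baseChange F) e.symm.toLinearMap
  have hST : S ∪ T ⊆ Set.range (algebraMap (Algebra.adjoin K (S ∪ T)) F) :=
    fun s hs ↦ ⟨⟨s, Algebra.subset_adjoin hs⟩, rfl⟩
  refine of_map_range_eq (F := F) Subtype.val_injective e he (le_antisymm ?_ ?_)
  · exact map_range_extendScalars_le a b e.toLinearMap (Set.subset_union_left.trans hST)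
  · intro y hy
    refine ⟨e.symm y, ?_, e.apply_symm_apply y⟩
    exact map_range_extendScalars_le b a e.symm.toLinearMap (Set.subset_union_right.trans hST)
      ⟨y, hy, rfl⟩

section Rank

open Cardinal

variable {K : Type*} {F A B : Type u} [CommSemiring K] [StrongRankCondition K] [CommSemiring F]
  [StrongRankCondition F] [Algebra K F]
  [NonUnitalNonAssocSemiring A] [Module K A] [SMulCommClass K A A] [IsScalarTower K A A]
  [NonUnitalNonAssocSemiring B] [Module K B] [SMulCommClass K B B] [IsScalarTower K B B]
  [Module.Free K A] [Module.Free K B]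

theorem rank_eq (h : IsomorphicOver K F A B) : Module.rank K A = Module.rank K B := by
  obtain ⟨e, -⟩ := h
  simpa only [Module.rank_baseChange, lift_id] using e.rank_eq

theorem exists_adjoin_of_rank_lt {μ : Cardinal.{u}} (hμ : ℵ₀ ≤ μ) (hA : Module.rank K A < μ)
    (h : IsomorphicOver K F A B) :
    ∃ S : Set F, #S < μ ∧ IsomorphicOver K (Algebra.adjoin K S) A B := by
  have hrank : Module.rank K A = Module.rank K B := h.rank_eq
  obtain ⟨e, he⟩ := h
  let a := Module.Free.chooseBasis K A
  let b := Module.Free.chooseBasis K B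
  have ha : #(Module.Free.ChooseBasisIndex K A) < μ := a.mk_eq_rank''.trans_lt hA
  have hb : #(Module.Free.ChooseBasisIndex K B) < μ :=
    b.mk_eq_rank''.trans_lt (hrank.symm.trans_lt hA)
  refine ⟨_, (mk_union_le _ _).trans_lt (add_lt_of_lt hμ ?_ ?_), adjoin_matrixEntries a b e he⟩
  · exact mk_matrixEntries_lt _ _ _ hμ ha hb
  · exact mk_matrixEntries_lt _ _ _ hμ hb ha

end Rank

end IsomorphicOver

end IsomorphicOver

open Cardinal in
theorem stmt18_general {K F₁ A B : Type u} {F₂ : Type*} [Field K] [CommRing F₁] [Nontrivial F₁]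
    [Algebra K F₁] [CommRing F₂] [Algebra K F₂]
    [NonUnitalNonAssocRing A] [Module K A] [SMulCommClass K A A] [IsScalarTower K A A]
    [NonUnitalNonAssocRing B] [Module K B] [SMulCommClass K B B] [IsScalarTower K B B]
    (hA : Module.rank K A < max ℵ₀ #K) (hclos : Nonempty (AlgebraicClosure K →ₐ[K] F₂))
    (h : IsomorphicOver K F₁ A B) : IsomorphicOver K F₂ A B := by
  obtain ⟨S, hS, hiso⟩ := h.exists_adjoin_of_rank_lt (le_max_left _ _) hA
  obtain ⟨φ⟩ := nonempty_algHom_adjoin_algebraicClosure_of_mk_lt S hS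
  obtain ⟨j⟩ := hclos
  exact hiso.of_algHom (j.comp φ)

/-- Let `K ⊆ F₁, F₂` be field extensions, `A`, `B` two `K`-algebras of the same
dimension `ω` with `|K| > ω`, and suppose the algebraic closure of `K` embeds in `F₂` (over `K`).
If `A ⊗_K F₁ ≅ B ⊗_K F₁` as `F₁`-algebras, then `A ⊗_K F₂ ≅ B ⊗_K F₂` as `F₂`-algebras. -/
theorem stmt18 (K F₁ F₂ : Type u) [Field K]
    [Field F₁] [Algebra K F₁] [Field F₂] [Algebra K F₂]
    (A B : Type u)
    [NonUnitalNonAssocRing A] [Module K A] [SMulCommClass K A A] [IsScalarTower K A A]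
    [NonUnitalNonAssocRing B] [Module K B] [SMulCommClass K B B] [IsScalarTower K B B]
    (ω : Cardinal.{u}) (hA : Module.rank K A = ω) (hB : Module.rank K B = ω)
    (hK : ω < Cardinal.mk K)
    (hclos : Nonempty (AlgebraicClosure K →ₐ[K] F₂))
    (h : ∃ e : (F₁ ⊗[K] A) ≃ₗ[F₁] (F₁ ⊗[K] B), ∀ x y, e (x * y) = e x * e y) :
    ∃ e : (F₂ ⊗[K] A) ≃ₗ[F₂] (F₂ ⊗[K] B), ∀ x y, e (x * y) = e x * e y :=
  stmt18_general (lt_max_of_lt_right (hA ▸ hK)) hclos h
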